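/- Define u₀ : ℝ³ → ℝ³ by u₀(x,y,z) := (−2zx, −2zy, x² + y² − z² + 1) / √(4z²(x² + y²) + (1 + x² + y² − z²)²), wherever the denominator is nonzero. Then: (i) for every point p = (x,y,z) of the closed unit ball with p ≠ (0,0,1) and p ≠ (0,0,−1), the denominator is nonzero and |u₀(p)| = 1; (ii) u₀(p) · p = 0 for every p on the unit sphere S² with p ≠ (0,0,±1). In particular u₀ is a unit vector field on the closed unit ball minus the two poles which is tangent to the boundary sphere. -/

import Mathlib

noncomputable section

open Real

/-- `ℝ³` with the Euclidean norm. -/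
abbrev E3 := EuclideanSpace ℝ (Fin 3)

def toE3 (v : Fin 3 → ℝ) : E3 := (EuclideanSpace.equiv (Fin 3) ℝ).symm v

/-- Euclidean dot product on `ℝ³`. -/
def dot3 (v w : E3) : ℝ := ∑ i, v i * w i

/-- The denominator `√(4z²(x²+y²) + (1+x²+y²−z²)²)`. -/
def den (p : E3) : ℝ :=
  Real.sqrt (4 * (p 2) ^ 2 * ((p 0) ^ 2 + (p 1) ^ 2) +
    (1 + (p 0) ^ 2 + (p 1) ^ 2 - (p 2) ^ 2) ^ 2)

/-- The explicit competitor
`u₀(x,y,z) = (−2zx, −2zy, x²+y²−z²+1)/√(4z²(x²+y²)+(1+x²+y²−z²)²)`. -/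
def u0 (p : E3) : E3 :=
  toE3 ![(-2 * p 2 * p 0) / den p, (-2 * p 2 * p 1) / den p,
    ((p 0) ^ 2 + (p 1) ^ 2 - (p 2) ^ 2 + 1) / den p]

def northPole : E3 := toE3 ![0, 0, 1]
def southPole : E3 := toE3 ![0, 0, -1]

/-!
With `ρ = √(x² + y²)` and `w = ρ + iz`, the denominator of `u₀` is `|1 + w²| = |w - i| |w + i|`,
the product of the distances to the two poles, so it vanishes at the poles only. It is also the
length of the numerator, whence `|u₀| = 1`; and the numerator has inner product `z (1 - |p|²)`
with `p`, which vanishes on the unit sphere.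
-/

lemma toE3_apply (v : Fin 3 → ℝ) (i : Fin 3) : toE3 v i = v i := rfl

lemma E3.norm_sq_eq (p : E3) : ‖p‖ ^ 2 = p 0 ^ 2 + p 1 ^ 2 + p 2 ^ 2 := by
  rw [EuclideanSpace.real_norm_sq_eq, Fin.sum_univ_three]

lemma dot3_smul_left (c : ℝ) (v w : E3) : dot3 (c • v) w = c * dot3 v w := by
  simp only [dot3, PiLp.smul_apply, smul_eq_mul, Finset.mul_sum, mul_assoc]

lemma den_eq_norm_sub_mul_norm_sub (p : E3) :
    den p = ‖p - northPole‖ * ‖p - southPole‖ := by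
  have hN : ‖p - northPole‖ ^ 2 = p 0 ^ 2 + p 1 ^ 2 + (p 2 - 1) ^ 2 := by
    simp [E3.norm_sq_eq, northPole, toE3_apply]
  have hS : ‖p - southPole‖ ^ 2 = p 0 ^ 2 + p 1 ^ 2 + (p 2 + 1) ^ 2 := by
    simp [E3.norm_sq_eq, southPole, toE3_apply]
  rw [den, Real.sqrt_eq_iff_mul_self_eq (by positivity) (by positivity), ← sq, mul_pow, hN, hS]
  ring

lemma den_eq_zero_iff {p : E3} : den p = 0 ↔ p = northPole ∨ p = southPole := by
  rw [den_eq_norm_sub_mul_norm_sub, mul_eq_zero, norm_sub_eq_zero_iff, norm_sub_eq_zero_iff]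

/-- The numerator of `u₀`. For `z ≠ 0` it is `-2z (p - c e₃)` with `c = (|p|² + 1) / (2z)`, a
normal at `p` to the sphere through `p` centred at `c e₃` that meets the unit sphere
perpendicularly. -/
def sphereNormal (p : E3) : E3 :=
  toE3 ![-2 * p 2 * p 0, -2 * p 2 * p 1, p 0 ^ 2 + p 1 ^ 2 - p 2 ^ 2 + 1]

lemma norm_sphereNormal (p : E3) : ‖sphereNormal p‖ = den p := by
  rw [den, ← Real.sqrt_sq (norm_nonneg (sphereNormal p)), E3.norm_sq_eq]
  simp only [sphereNormal, toE3_apply, Matrix.cons_val]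
  ring_nf

lemma dot3_sphereNormal_self (p : E3) : dot3 (sphereNormal p) p = p 2 * (1 - ‖p‖ ^ 2) := by
  rw [E3.norm_sq_eq]
  simp only [dot3, Fin.sum_univ_three, sphereNormal, toE3_apply, Matrix.cons_val]
  ring

lemma u0_eq_inv_den_smul (p : E3) : u0 p = (den p)⁻¹ • sphereNormal p := by
  ext i
  fin_cases i <;> simp [u0, sphereNormal, toE3_apply, div_eq_inv_mul]

lemma norm_u0 {p : E3} (hp : den p ≠ 0) : ‖u0 p‖ = 1 := by
  have hp' : sphereNormal p ≠ 0 := by rwa [← norm_ne_zero_iff, norm_sphereNormal]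
  rw [u0_eq_inv_den_smul, ← norm_sphereNormal]
  exact norm_smul_inv_norm (𝕜 := ℝ) hp'

lemma dot3_u0_self (p : E3) : dot3 (u0 p) p = p 2 * (1 - ‖p‖ ^ 2) / den p := by
  rw [u0_eq_inv_den_smul, dot3_smul_left, dot3_sphereNormal_self, inv_mul_eq_div]

theorem u0_unit_and_tangent_general {p : E3} (hN : p ≠ northPole) (hS : p ≠ southPole) :
    den p ≠ 0 ∧ ‖u0 p‖ = 1 ∧ dot3 (u0 p) p = p 2 * (1 - ‖p‖ ^ 2) / den p := by
  have hden : den p ≠ 0 := mt den_eq_zero_iff.mp (not_or.mpr ⟨hN, hS⟩)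
  exact ⟨hden, norm_u0 hden, dot3_u0_self p⟩

/-- On the closed unit ball minus the two poles, the denominator of `u₀` is
nonzero and `u₀` is a unit vector field; on the unit sphere minus the poles,
`u₀` is tangent to the sphere. -/
theorem u0_unit_and_tangent :
    (∀ p : E3, ‖p‖ ≤ 1 → p ≠ northPole → p ≠ southPole →
      den p ≠ 0 ∧ ‖u0 p‖ = 1) ∧
    (∀ p : E3, ‖p‖ = 1 → p ≠ northPole → p ≠ southPole →
      dot3 (u0 p) p = 0) := by
  exact ⟨fun p _ hN hS => (u0_unit_and_tangent_general hN hS).imp_right And.left,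
    fun p hp hN hS => by simp [(u0_unit_and_tangent_general hN hS).2.2, hp]⟩
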